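/- Classification of singular vectors, case κ = n: let (ε₁,…,ε_n) = (1,…,1), 0 ≤ l, m ≤ n. A vector of 𝒲_l⊗𝒲_m that is a simultaneous eigenvector of all Δ(k_i) (i ∈ ℤ/nℤ) and is annihilated by Δ(e_i) for all 1 ≤ i ≤ n−1 is a nonzero scalar multiple of ξ_t^{l,m} for some t with (l+m−n)_+ ≤ t ≤ min(l,m); conversely every ξ_t^{l,m} in this range has these properties. -/

import Mathlib

/-!
For `ε = (1,…,1)` a basis vector `|a⟩⊗|b⟩` of `𝒲⊗𝒲` is a word of length `n` in the local states
`(a_u, b_u) ∈ {(0,0), (0,1), (1,0), (1,1)}`, ordered in this way. The operator `Δ(e_r)`, `r ≠ 0`,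
exchanges the entries of `b`, or of `a`, at the adjacent positions `r-1, r` (`dE_apply`).

A nonzero vector killed by all these `Δ(e_r)` has a sorted word in its support (`exists_srt`): reading
off suitable coefficients of `Δ(e_r) v = 0` shows that a word with an adjacent descent either has
coefficient zero, or contains `(1,0),(0,1)` and its coefficient is `q` times that of the word with
these two states exchanged, so a word of the support with the fewest inversions is sorted.
Moreover `-q⁻¹` is not a root of unity, so the eigenvalues of the `Δ(k_i)` together with the degrees
`l, m` determine the weight `a + b` (`weight_unique`). In a given weight and degree there is at most
one sorted word (`Srt.unique`), and its weight has the form `(0^{n-s-t}, 1^s, 2^t)` with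
`s = l + m - 2t` (`Srt.wt`).

The vector `ξ_t` is the sum of `q^inv |a⟩⊗|b⟩` over all pairs of that weight and degree
(`xiA_apply`). It is killed by `Δ(e_r)` because its weight is increasing and an adjacent exchange
changes `inv` by one (`xiA_dE`). A singular vector minus the multiple of `ξ_t` with the same
coefficient at the sorted word has no sorted word left in its support, hence vanishes
(`singular_eq`).
-/

open scoped BigOperators

set_option synthInstance.maxHeartbeats 1000000
set_option maxHeartbeats 1000000

noncomputable section

namespace TetraGQ

/-! ## Scalar ingredients -/

/-- `(a;qb)_m = ∏_{k=0}^{m-1} (1 - a qb^k)`. -/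
def poch (qb a : ℂ) (m : ℕ) : ℂ := ∏ k ∈ Finset.range m, (1 - a * qb ^ k)

/-- The `q`-binomial `binom(m,k)_qb`, zero unless `k ≤ m`. -/
def qbinom (qb : ℂ) (m k : ℕ) : ℂ :=
  if k ≤ m then poch qb qb m / (poch qb qb k * poch qb qb (m - k)) else 0

/-- `[m] = (q^m - q^{-m})/(q - q^{-1})`. -/
def qnum (q : ℂ) (m : ℕ) : ℂ := (q ^ m - q⁻¹ ^ m) / (q - q⁻¹)

/-- `[m]! = ∏_{k=1}^m [k]`. -/
def qfac (q : ℂ) (m : ℕ) : ℂ := ∏ k ∈ Finset.range m, qnum q (k + 1)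

/-- The symmetric `q`-binomial `[m choose k]`, zero unless `k ≤ m`. -/
def qbin (q : ℂ) (m k : ℕ) : ℂ :=
  if k ≤ m then qfac q m / (qfac q k * qfac q (m - k)) else 0

/-- The 3D `R` matrix entry `R^{a,b,c}_{i,j,k}`. -/
def R3 (q : ℂ) (a b c i j k : ℕ) : ℂ :=
  (if a + b = i + j ∧ b + c = j + k then (1 : ℂ) else 0) *
    ∑ lam ∈ Finset.range (b + 1),
      (-1 : ℂ) ^ lam *
        q ^ ((i : ℤ) * ((c : ℤ) - (j : ℤ)) + ((k : ℤ) + 1) * (lam : ℤ) +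
            ((b : ℤ) - (lam : ℤ)) * ((b : ℤ) - (lam : ℤ) - (k : ℤ))) *
        (poch (q ^ 2) (q ^ 2) (c + (b - lam)) / poch (q ^ 2) (q ^ 2) c) *
        qbinom (q ^ 2) i (b - lam) * qbinom (q ^ 2) j lam

/-- The 3D `L` matrix entry `L^{a,b,c}_{i,j,k}`. -/
def L3 (q : ℂ) (a b c i j k : ℕ) : ℂ :=
  if a = 0 ∧ b = 0 ∧ i = 0 ∧ j = 0 ∧ c = k then 1
  else if a = 1 ∧ b = 1 ∧ i = 1 ∧ j = 1 ∧ c = k then 1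
  else if a = 0 ∧ b = 1 ∧ i = 0 ∧ j = 1 ∧ c = k then -q ^ (k + 1)
  else if a = 1 ∧ b = 0 ∧ i = 1 ∧ j = 0 ∧ c = k then q ^ k
  else if a = 0 ∧ b = 1 ∧ i = 1 ∧ j = 0 ∧ c + 1 = k then 1 - q ^ (2 * k)
  else if a = 1 ∧ b = 0 ∧ i = 0 ∧ j = 1 ∧ c = k + 1 then 1
  else 0

/-- `S^(0) = R`, `S^(1) = L`. -/
def Sg (q : ℂ) (e : Bool) (a b c i j k : ℕ) : ℂ :=
  if e then L3 q a b c i j k else R3 q a b c i j k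

/-- Coefficient of `z^{c0}` in the trace solution matrix element
`S₀(z)^{a,b}_{i,j}`. -/
def trCoef (q : ℂ) {n : ℕ} [NeZero n] (ε : Fin n → Bool) (a b i j : Fin n → ℕ)
    (c0 : ℕ) : ℂ :=
  ∑ᶠ c : Fin n → ℕ,
    if c 0 = c0 then
      ∏ t : Fin n, Sg q (ε t) (a t) (b t) (c t) (i t) (j t) (c (t + 1))
    else 0

/-- Coefficient of `z^{c0}` in the boundary solution matrix element
`S₀^{1,1}(z)^{a,b}_{i,j}`. -/
def bdCoef (q : ℂ) {n : ℕ} (ε : Fin n → Bool) (a b i j : Fin n → ℕ) (c0 : ℕ) : ℂ :=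
  ∑ᶠ c : Fin (n + 1) → ℕ,
    if c 0 = c0 then
      poch (q ^ 2) (q ^ 2) c0 / (poch q q c0 * poch q q (c (Fin.last n))) *
        ∏ t : Fin n, Sg q (ε t) (a t) (b t) (c t.castSucc) (i t) (j t) (c t.succ)
    else 0

/-- Coefficient of `z^{c0}` in the boundary solution matrix element
`S₀^{s,t}(z)^{a,b}_{i,j}`. -/
def bdCoefST (q : ℂ) (s t : ℕ) {n : ℕ} (ε : Fin n → Bool) (a b i j : Fin n → ℕ)
    (c0 : ℕ) : ℂ :=
  ∑ᶠ c : Fin (n + 1) → ℕ,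
    if c 0 = c0 then
      poch (q ^ 2) (q ^ 2) (s * c0) /
          (poch (q ^ s ^ 2) (q ^ s ^ 2) c0 * poch (q ^ t ^ 2) (q ^ t ^ 2) (c (Fin.last n))) *
        ∏ u : Fin n,
          Sg q (ε u) (a u) (b u)
            (if u.castSucc = 0 then s * c0 else c u.castSucc) (i u) (j u)
            (if u.succ = Fin.last n then t * c (Fin.last n) else c u.succ)
    else 0

/-! ## The spaces `𝒲` and `𝒲⊗𝒲` -/

/-- `m` is an admissible occupation vector: at positions with `ε = 1` the entry is `≤ 1`. -/
def Ok {n : ℕ} (ε : Fin n → Bool) (m : Fin n → ℕ) : Prop := ∀ t, ε t = true → m t ≤ 1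

instance {n : ℕ} (ε : Fin n → Bool) : DecidablePred (Ok ε) := fun m =>
  decidable_of_iff (∀ t, ε t = true → m t ≤ 1) Iff.rfl

/-- Basis labels of `𝒲`. -/
def Idx {n : ℕ} (ε : Fin n → Bool) : Type := {m : Fin n → ℕ // Ok ε m}

/-- The space `𝒲` with basis `|m⟩`, over the field `L`. -/
abbrev W (L : Type) [Field L] {n : ℕ} (ε : Fin n → Bool) : Type := Idx ε →₀ L

/-- The space `𝒲 ⊗ 𝒲` with basis `|a⟩⊗|b⟩`, over the field `L`. -/
abbrev WW (L : Type) [Field L] {n : ℕ} (ε : Fin n → Bool) : Type := (Idx ε × Idx ε) →₀ L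

/-- The ket `|m⟩ ∈ 𝒲`; it is `0` if any coordinate is out of range. -/
def ket (L : Type) [Field L] {n : ℕ} (ε : Fin n → Bool) (m : Fin n → ℤ) : W L ε :=
  if h : (∀ t, 0 ≤ m t) ∧ Ok ε (fun t => (m t).toNat) then
    Finsupp.single ⟨fun t => (m t).toNat, h.2⟩ 1
  else 0

/-- The ket `|a⟩⊗|b⟩ ∈ 𝒲⊗𝒲`; it is `0` if any coordinate is out of range. -/
def kk (L : Type) [Field L] {n : ℕ} (ε : Fin n → Bool) (a b : Fin n → ℤ) : WW L ε :=
  if h : ((∀ t, 0 ≤ a t) ∧ Ok ε (fun t => (a t).toNat)) ∧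
      ((∀ t, 0 ≤ b t) ∧ Ok ε (fun t => (b t).toNat)) then
    Finsupp.single (⟨fun t => (a t).toNat, h.1.2⟩, ⟨fun t => (b t).toNat, h.2.2⟩) 1
  else 0

/-- The linear endomorphism of a free module determined by images of basis vectors. -/
def mkEnd (L : Type) [Field L] {α : Type} (v : α → (α →₀ L)) :
    (α →₀ L) →ₗ[L] (α →₀ L) :=
  Finsupp.lsum L fun m => LinearMap.toSpanSingleton L (α →₀ L) (v m)

/-- Product of vectors of `𝒲`, landing in `𝒲⊗𝒲`. -/
def tens (L : Type) [Field L] {n : ℕ} {ε : Fin n → Bool} (u v : W L ε) : WW L ε :=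
  u.sum fun a ca => v.sum fun b cb => Finsupp.single (a, b) (ca * cb)

/-- The operator `A ⊗ B` on `𝒲⊗𝒲`. -/
def opT (L : Type) [Field L] {n : ℕ} {ε : Fin n → Bool}
    (A B : W L ε →ₗ[L] W L ε) : WW L ε →ₗ[L] WW L ε :=
  mkEnd L fun mm => tens L (A (Finsupp.single mm.1 1)) (B (Finsupp.single mm.2 1))

/-- The subspace `𝒲_l ⊗ 𝒲_m` of `𝒲⊗𝒲`. -/
def WWlm (L : Type) [Field L] {n : ℕ} (ε : Fin n → Bool) (l m : ℕ) :
    Submodule L (WW L ε) :=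
  Submodule.span L {v | ∃ p : Idx ε × Idx ε,
    (∑ t, p.1.1 t) = l ∧ (∑ t, p.2.1 t) = m ∧ v = Finsupp.single p 1}

/-- The subspace `𝒲_l` of `𝒲`. -/
def Wl (L : Type) [Field L] {n : ℕ} (ε : Fin n → Bool) (l : ℕ) : Submodule L (W L ε) :=
  Submodule.span L {v | ∃ p : Idx ε, (∑ t, p.1 t) = l ∧ v = Finsupp.single p 1}

/-! ## The scalar field of formal Laurent series in `z` over `ℂ` -/

abbrev K : Type := LaurentSeries ℂ

/-- The power series `Σ_{c≥0} f(c) z^c` as an element of `K`. -/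
def mkS (f : ℕ → ℂ) : K := HahnSeries.ofPowerSeries ℤ ℂ (PowerSeries.mk f)

/-- Constants `ℂ → K`. -/
def cK : ℂ →+* K := HahnSeries.C

/-- The variable `z ∈ K`. -/
def zK : K := mkS fun c => if c = 1 then 1 else 0

/-! ## The solutions of the Yang-Baxter equation -/

/-- The unnormalized trace solution `S₀(z)` acting on `𝒲⊗𝒲`. -/
def S0tr (q : ℂ) {n : ℕ} [NeZero n] (ε : Fin n → Bool) : WW K ε →ₗ[K] WW K ε :=
  mkEnd K fun ij =>
    ∑ a ∈ Fintype.piFinset (fun t => Finset.range (ij.1.1 t + ij.2.1 t + 1)),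
      mkS (trCoef q ε a (fun t => ij.1.1 t + ij.2.1 t - a t) ij.1.1 ij.2.1) •
        kk K ε (fun t => (a t : ℤ)) (fun t => (ij.1.1 t : ℤ) + (ij.2.1 t : ℤ) - (a t : ℤ))

/-- The unnormalized boundary solution `S₀^{1,1}(z)` acting on `𝒲⊗𝒲`. -/
def S0bd (q : ℂ) {n : ℕ} (ε : Fin n → Bool) : WW K ε →ₗ[K] WW K ε :=
  mkEnd K fun ij =>
    ∑ a ∈ Fintype.piFinset (fun t => Finset.range (ij.1.1 t + ij.2.1 t + 1)),
      mkS (bdCoef q ε a (fun t => ij.1.1 t + ij.2.1 t - a t) ij.1.1 ij.2.1) •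
        kk K ε (fun t => (a t : ℤ)) (fun t => (ij.1.1 t : ℤ) + (ij.2.1 t : ℤ) - (a t : ℤ))

/-- The unnormalized boundary solution `S₀^{s,t}(z)` acting on `𝒲⊗𝒲`. -/
def S0bdST (q : ℂ) (s t : ℕ) {n : ℕ} (ε : Fin n → Bool) : WW K ε →ₗ[K] WW K ε :=
  mkEnd K fun ij =>
    ∑ a ∈ Fintype.piFinset (fun u => Finset.range (ij.1.1 u + ij.2.1 u + 1)),
      mkS (bdCoefST q s t ε a (fun u => ij.1.1 u + ij.2.1 u - a u) ij.1.1 ij.2.1) •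
        kk K ε (fun u => (a u : ℤ)) (fun u => (ij.1.1 u : ℤ) + (ij.2.1 u : ℤ) - (a u : ℤ))

/-- The diagonal gauge operator; `Kdiag pc ε s |m⟩ = pc^{s·(m₁+⋯+m_n)} |m⟩`
(`s = -1` gives `K`, `s = 1` gives `K⁻¹`). -/
def Kdiag (pc : ℂ) {n : ℕ} (ε : Fin n → Bool) (s : ℤ) : W K ε →ₗ[K] W K ε :=
  mkEnd K fun m => cK (pc ^ (s * ∑ t, (m.1 t : ℤ))) • Finsupp.single m 1

/-- The gauge transformed boundary solution `S̃₀^{1,1}(z) = (K⊗1) S₀^{1,1}(z) (1⊗K⁻¹)`. -/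
def S0bdT (q pc : ℂ) {n : ℕ} (ε : Fin n → Bool) : WW K ε →ₗ[K] WW K ε :=
  opT K (Kdiag pc ε (-1)) LinearMap.id ∘ₗ S0bd q ε ∘ₗ opT K LinearMap.id (Kdiag pc ε 1)

/-! ## The generalized quantum group actions -/

/-- Value of an occupation vector at a natural-number position. -/
def av {n : ℕ} (m : Fin n → ℕ) (p : ℕ) : ℕ := if h : p < n then m ⟨p, h⟩ else 0

/-- Unit coordinate vector at a natural-number position. -/
def dlt {n : ℕ} (p : ℕ) : Fin n → ℤ := fun t => if (t : ℕ) = p then 1 else 0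

/-- `q_i = q` if `ε_i = 0` and `-q⁻¹` if `ε_i = 1` (0-based positions). -/
def qc (q : ℂ) {n : ℕ} (ε : Fin n → Bool) (p : ℕ) : ℂ :=
  if h : p < n then (if ε ⟨p, h⟩ then -q⁻¹ else q) else q

/-- Type A generator `e_r` of the action `π_x`. -/
def eA (q : ℂ) {L : Type} [Field L] (ι : ℂ →+* L) {n : ℕ} (ε : Fin n → Bool) (x : L)
    (r : Fin n) : W L ε →ₗ[L] W L ε :=
  mkEnd L fun m =>
    (x ^ (if (r : ℕ) = 0 then 1 else 0) * ι (qnum q (av m.1 (((r : ℕ) + n - 1) % n)))) •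
      ket L ε fun t => (m.1 t : ℤ) - dlt (((r : ℕ) + n - 1) % n) t + dlt (r : ℕ) t

/-- Type A generator `f_r` of the action `π_x`. -/
def fA (q : ℂ) {L : Type} [Field L] (ι : ℂ →+* L) {n : ℕ} (ε : Fin n → Bool) (x : L)
    (r : Fin n) : W L ε →ₗ[L] W L ε :=
  mkEnd L fun m =>
    (x ^ (if (r : ℕ) = 0 then (-1 : ℤ) else 0) * ι (qnum q (av m.1 (r : ℕ)))) •
      ket L ε fun t => (m.1 t : ℤ) + dlt (((r : ℕ) + n - 1) % n) t - dlt (r : ℕ) t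

/-- Type A generator `k_r^{s}` (`s = ±1`) of the action `π_x`. -/
def kA (q : ℂ) {L : Type} [Field L] (ι : ℂ →+* L) {n : ℕ} (ε : Fin n → Bool) (s : ℤ)
    (r : Fin n) : W L ε →ₗ[L] W L ε :=
  mkEnd L fun m =>
    ι ((qc q ε (((r : ℕ) + n - 1) % n) ^ (-(av m.1 (((r : ℕ) + n - 1) % n) : ℤ)) *
        qc q ε (r : ℕ) ^ (av m.1 (r : ℕ) : ℤ)) ^ s) • Finsupp.single m 1

/-- Type B generator `e_r` of the action `π_x`. -/
def eB (q : ℂ) {L : Type} [Field L] (ι : ℂ →+* L) {n : ℕ} (ε : Fin n → Bool) (x : L)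
    (r : Fin (n + 1)) : W L ε →ₗ[L] W L ε :=
  mkEnd L fun m =>
    if (r : ℕ) = 0 then x • ket L ε (fun t => (m.1 t : ℤ) + dlt 0 t)
    else if (r : ℕ) = n then
      ι (qnum q (av m.1 (n - 1))) • ket L ε (fun t => (m.1 t : ℤ) - dlt (n - 1) t)
    else
      ι (qnum q (av m.1 ((r : ℕ) - 1))) •
        ket L ε (fun t => (m.1 t : ℤ) - dlt ((r : ℕ) - 1) t + dlt (r : ℕ) t)

/-- Type B generator `f_r` of the action `π_x`. -/
def fB (q : ℂ) {L : Type} [Field L] (ι : ℂ →+* L) {n : ℕ} (ε : Fin n → Bool) (x : L)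
    (r : Fin (n + 1)) : W L ε →ₗ[L] W L ε :=
  mkEnd L fun m =>
    if (r : ℕ) = 0 then
      (x⁻¹ * ι (qnum q (av m.1 0))) • ket L ε (fun t => (m.1 t : ℤ) - dlt 0 t)
    else if (r : ℕ) = n then ket L ε (fun t => (m.1 t : ℤ) + dlt (n - 1) t)
    else
      ι (qnum q (av m.1 (r : ℕ))) •
        ket L ε (fun t => (m.1 t : ℤ) + dlt ((r : ℕ) - 1) t - dlt (r : ℕ) t)

/-- Type B generator `k_r^{s}` (`s = ±1`) of the action `π_x`; `pc = i q^{-1/2}`. -/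
def kB (q pc : ℂ) {L : Type} [Field L] (ι : ℂ →+* L) {n : ℕ} (ε : Fin n → Bool) (s : ℤ)
    (r : Fin (n + 1)) : W L ε →ₗ[L] W L ε :=
  mkEnd L fun m =>
    ι ((if (r : ℕ) = 0 then pc⁻¹ * qc q ε 0 ^ (av m.1 0 : ℤ)
        else if (r : ℕ) = n then pc * qc q ε (n - 1) ^ (-(av m.1 (n - 1) : ℤ))
        else qc q ε ((r : ℕ) - 1) ^ (-(av m.1 ((r : ℕ) - 1) : ℤ)) *
          qc q ε (r : ℕ) ^ (av m.1 (r : ℕ) : ℤ)) ^ s) • Finsupp.single m 1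

/-! ## Coproduct actions on `𝒲⊗𝒲` (type A) -/

/-- `Δ(e_r) = 1⊗e_r + e_r⊗k_r`, with `π_x` on the first factor, `π_y` on the second. -/
def dE (q : ℂ) {L : Type} [Field L] (ι : ℂ →+* L) {n : ℕ} (ε : Fin n → Bool) (x y : L)
    (r : Fin n) : WW L ε →ₗ[L] WW L ε :=
  opT L LinearMap.id (eA q ι ε y r) + opT L (eA q ι ε x r) (kA q ι ε 1 r)

/-- `Δ'(e_r) = e_r⊗1 + k_r⊗e_r`. -/
def dE' (q : ℂ) {L : Type} [Field L] (ι : ℂ →+* L) {n : ℕ} (ε : Fin n → Bool) (x y : L)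
    (r : Fin n) : WW L ε →ₗ[L] WW L ε :=
  opT L (eA q ι ε x r) LinearMap.id + opT L (kA q ι ε 1 r) (eA q ι ε y r)

/-- `Δ(f_r) = f_r⊗1 + k_r⁻¹⊗f_r`. -/
def dF (q : ℂ) {L : Type} [Field L] (ι : ℂ →+* L) {n : ℕ} (ε : Fin n → Bool) (x y : L)
    (r : Fin n) : WW L ε →ₗ[L] WW L ε :=
  opT L (fA q ι ε x r) LinearMap.id + opT L (kA q ι ε (-1) r) (fA q ι ε y r)

/-- `Δ'(f_r) = 1⊗f_r + f_r⊗k_r⁻¹`. -/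
def dF' (q : ℂ) {L : Type} [Field L] (ι : ℂ →+* L) {n : ℕ} (ε : Fin n → Bool) (x y : L)
    (r : Fin n) : WW L ε →ₗ[L] WW L ε :=
  opT L LinearMap.id (fA q ι ε y r) + opT L (fA q ι ε x r) (kA q ι ε (-1) r)

/-- `Δ(k_r^s) = Δ'(k_r^s) = k_r^s ⊗ k_r^s`. -/
def dK (q : ℂ) {L : Type} [Field L] (ι : ℂ →+* L) {n : ℕ} (ε : Fin n → Bool) (s : ℤ)
    (r : Fin n) : WW L ε →ₗ[L] WW L ε :=
  opT L (kA q ι ε s r) (kA q ι ε s r)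

/-! ## Coproduct actions on `𝒲⊗𝒲` (type B) -/

def dEB (q pc : ℂ) {L : Type} [Field L] (ι : ℂ →+* L) {n : ℕ} (ε : Fin n → Bool) (x y : L)
    (r : Fin (n + 1)) : WW L ε →ₗ[L] WW L ε :=
  opT L LinearMap.id (eB q ι ε y r) + opT L (eB q ι ε x r) (kB q pc ι ε 1 r)

def dEB' (q pc : ℂ) {L : Type} [Field L] (ι : ℂ →+* L) {n : ℕ} (ε : Fin n → Bool) (x y : L)
    (r : Fin (n + 1)) : WW L ε →ₗ[L] WW L ε :=
  opT L (eB q ι ε x r) LinearMap.id + opT L (kB q pc ι ε 1 r) (eB q ι ε y r)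

def dFB (q pc : ℂ) {L : Type} [Field L] (ι : ℂ →+* L) {n : ℕ} (ε : Fin n → Bool) (x y : L)
    (r : Fin (n + 1)) : WW L ε →ₗ[L] WW L ε :=
  opT L (fB q ι ε x r) LinearMap.id + opT L (kB q pc ι ε (-1) r) (fB q ι ε y r)

def dFB' (q pc : ℂ) {L : Type} [Field L] (ι : ℂ →+* L) {n : ℕ} (ε : Fin n → Bool) (x y : L)
    (r : Fin (n + 1)) : WW L ε →ₗ[L] WW L ε :=
  opT L LinearMap.id (fB q ι ε y r) + opT L (fB q ι ε x r) (kB q pc ι ε (-1) r)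

def dKB (q pc : ℂ) {L : Type} [Field L] (ι : ℂ →+* L) {n : ℕ} (ε : Fin n → Bool) (s : ℤ)
    (r : Fin (n + 1)) : WW L ε →ₗ[L] WW L ε :=
  opT L (kB q pc ι ε s r) (kB q pc ι ε s r)

/-! ## Structure constants -/

/-- Type A structure constant `D_{i,j}` (as a product over 0-based positions). -/
def DA (q : ℂ) {n : ℕ} (ε : Fin n → Bool) (i j : Fin n) : ℂ :=
  ∏ p ∈ (({((i : ℕ) + n - 1) % n, (i : ℕ)} : Finset ℕ) ∩
      ({((j : ℕ) + n - 1) % n, (j : ℕ)} : Finset ℕ)),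
    qc q ε p ^ (if i = j then (1 : ℤ) else -1)

/-- The set `⟨i⟩ = {i, i+1} ∩ [1,n]` of type B, translated to 0-based positions. -/
def nodeB (n i : ℕ) : Finset ℕ :=
  if i = 0 then {0} else if i = n then {n - 1} else {i - 1, i}

/-- Type B structure constant `D_{i,j}`. -/
def DB (q : ℂ) {n : ℕ} (ε : Fin n → Bool) (i j : Fin (n + 1)) : ℂ :=
  ∏ p ∈ nodeB n (i : ℕ) ∩ nodeB n (j : ℕ), qc q ε p ^ (if i = j then (1 : ℤ) else -1)

/-! ## Distinguished vectors -/

/-- The vector `J_{n,j} = Σ_{i, Σi=j} q^{inv(i)} |i⟩⊗|1-i⟩`. -/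
def Jfull (q : ℂ) {L : Type} [Field L] (ι : ℂ →+* L) {n : ℕ} (ε : Fin n → Bool)
    (j : ℕ) : WW L ε :=
  ∑ i ∈ Fintype.piFinset (fun _ : Fin n => Finset.range 2),
    (if (∑ t, i t) = j then
        ι (q ^ (∑ s : Fin n, ∑ t : Fin n, if s < t then i s * (1 - i t) else 0))
      else 0) •
      kk L ε (fun t => (i t : ℤ)) (fun t => 1 - (i t : ℤ))

/-- Extension of a `Fin s`-tuple to `ℕ` by zero. -/
def ivf {s : ℕ} (i : Fin s → ℕ) : ℕ → ℕ := fun p => if h : p < s then i ⟨p, h⟩ else 0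

/-- `inv(i₁,…,i_s) = Σ_{p<r} i_p (1 - i_r)`. -/
def invv (s : ℕ) (iv : ℕ → ℕ) : ℕ :=
  ∑ p ∈ Finset.range s, ∑ r ∈ Finset.range s, if p < r then iv p * (1 - iv r) else 0

/-- Occupation vector `(0^{nn-s-t}, i₁,…,i_s, 1^t)`. -/
def winA (nn s t : ℕ) (iv : ℕ → ℕ) : Fin nn → ℤ := fun u =>
  if (u : ℕ) < nn - s - t then 0
  else if (u : ℕ) < nn - t then (iv ((u : ℕ) - (nn - s - t)) : ℤ)
  else 1

/-- The singular vector `ξ_t^{l,m}` for `κ = n`. -/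
def xiA (q : ℂ) {L : Type} [Field L] (ι : ℂ →+* L) {n : ℕ} (ε : Fin n → Bool)
    (l m t : ℕ) : WW L ε :=
  ∑ i ∈ Fintype.piFinset (fun _ : Fin (l + m - 2 * t) => Finset.range 2),
    (if (∑ u, i u) = l - t then ι (q ^ invv (l + m - 2 * t) (ivf i)) else 0) •
      kk L ε (winA n (l + m - 2 * t) t (ivf i))
        (winA n (l + m - 2 * t) t (fun p => 1 - ivf i p))

/-- Occupation vector `(0^{nn-s-1}, i₁,…,i_s, last)`. -/
def winA1 (nn s : ℕ) (iv : ℕ → ℕ) (last : ℤ) : Fin nn → ℤ := fun u =>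
  if (u : ℕ) < nn - s - 1 then 0
  else if (u : ℕ) < nn - 1 then (iv ((u : ℕ) - (nn - s - 1)) : ℤ)
  else last

/-- The singular vector `ξ_s^{l,m}` for `κ = n-1`. -/
def xiA1 (q : ℂ) {L : Type} [Field L] (ι : ℂ →+* L) {n : ℕ} (ε : Fin n → Bool)
    (l m s : ℕ) : WW L ε :=
  ∑ j ∈ Finset.range (s + 1),
    ∑ i ∈ Fintype.piFinset (fun _ : Fin s => Finset.range 2),
      (if (∑ u, i u) = s - j then
          ι ((-1 : ℂ) ^ j * q ^ (j * (m - s + 1)) * q ^ invv s (ivf i))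
        else 0) •
        kk L ε (winA1 n s (ivf i) ((l : ℤ) + (j : ℤ) - (s : ℤ)))
          (winA1 n s (fun p => 1 - ivf i p) ((m : ℤ) - (j : ℤ)))

/-- The singular vector `ξ_s^{l,m}` for `0 ≤ κ ≤ n-2`. -/
def xiA2 (q : ℂ) {L : Type} [Field L] (ι : ℂ →+* L) {n : ℕ} (ε : Fin n → Bool)
    (l m s : ℕ) : WW L ε :=
  ∑ j ∈ Finset.range (s + 1),
    ι ((-1 : ℂ) ^ j * q ^ ((j : ℤ) * (2 * (s : ℤ) - (m : ℤ) - (j : ℤ) - 1) + (m : ℤ) * (s : ℤ)) *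
        qbin q s j) •
      kk L ε
        (fun u => if (u : ℕ) < n - 2 then 0
          else if (u : ℕ) = n - 2 then (j : ℤ) else (l : ℤ) - (j : ℤ))
        (fun u => if (u : ℕ) < n - 2 then 0
          else if (u : ℕ) = n - 2 then (s : ℤ) - (j : ℤ) else (m : ℤ) - (s : ℤ) + (j : ℤ))

/-- The type B singular vector `ξ_l`. -/
def xiB (q pc : ℂ) {L : Type} [Field L] (ι : ℂ →+* L) {n : ℕ} (ε : Fin n → Bool)
    (l : ℕ) : WW L ε :=
  ∑ m ∈ Finset.range (l + 1),
    ι ((-pc) ^ (-(m : ℤ)) * q ^ ((m : ℤ) * (l : ℤ) - ((m * (m + 1) / 2 : ℕ) : ℤ)) *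
        qbin q l m) •
      kk L ε (fun u => if (u : ℕ) = n - 1 then (m : ℤ) else 0)
        (fun u => if (u : ℕ) = n - 1 then (l : ℤ) - (m : ℤ) else 0)

/-! ## Miscellany -/

/-- Apply a list of operators, the rightmost element of the list acting first. -/
def appList {L : Type} [Field L] {n : ℕ} {ε : Fin n → Bool}
    (ops : List (WW L ε →ₗ[L] WW L ε)) (v : WW L ε) : WW L ε :=
  ops.foldr (fun A w => A w) v

/-- A natural number as an element of `Fin n`. -/
def mfin {n : ℕ} [NeZero n] (p : ℕ) : Fin n :=
  ⟨p % n, Nat.mod_lt p (Nat.pos_of_ne_zero (NeZero.ne n))⟩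

/-- Reference weight-`l` occupation vector: `(0^{n-l},1^l)` if `κ = n`, `l·e_n` otherwise. -/
def refAN (n κ l : ℕ) : Fin n → ℕ := fun t =>
  if κ = n then (if n - l ≤ (t : ℕ) then 1 else 0) else (if (t : ℕ) = n - 1 then l else 0)

/-- The flip `P(u⊗v) = v⊗u` on `𝒲⊗𝒲`. -/
def Pop (L : Type) [Field L] {n : ℕ} (ε : Fin n → Bool) : WW L ε →ₗ[L] WW L ε :=
  mkEnd L fun p => Finsupp.single (p.2, p.1) 1

/-! ### Matrix form of the operators -/

/-- The sequence `ε = (1,…,1)`, for which `𝒲 = V^{⊗n}` with `V` two-dimensional. -/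
abbrev allOne (n : ℕ) : Fin n → Bool := fun _ => true

lemma idx_le {n : ℕ} (a : Idx (allOne n)) (u : Fin n) : a.1 u ≤ 1 := a.2 u rfl

lemma idx_ext {n : ℕ} {a b : Idx (allOne n)} (h : ∀ u, a.1 u = b.1 u) : a = b :=
  Subtype.ext (funext h)

/-- The basis label `m` with the occupation numbers at positions `p` and `r` exchanged. -/
def swp {n : ℕ} (p r : Fin n) (m : Idx (allOne n)) : Idx (allOne n) :=
  ⟨fun u => m.1 (Equiv.swap p r u), fun _ _ => idx_le m _⟩

lemma swp_swp {n : ℕ} (p r : Fin n) (m : Idx (allOne n)) : swp p r (swp p r m) = m :=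
  idx_ext fun u => by simp [swp]

lemma swp_left {n : ℕ} (p r : Fin n) (m : Idx (allOne n)) : (swp p r m).1 p = m.1 r := by
  simp [swp]

lemma swp_right {n : ℕ} (p r : Fin n) (m : Idx (allOne n)) : (swp p r m).1 r = m.1 p := by
  simp [swp]

lemma swp_of_ne {n : ℕ} {p r u : Fin n} (m : Idx (allOne n)) (hp : u ≠ p) (hr : u ≠ r) :
    (swp p r m).1 u = m.1 u := by
  simp [swp, Equiv.swap_apply_of_ne_of_ne hp hr]

lemma swp_eq_iff {n : ℕ} (p r : Fin n) (a b : Idx (allOne n)) : swp p r a = b ↔ a = swp p r b := by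
  constructor
  · rintro rfl; rw [swp_swp]
  · rintro rfl; rw [swp_swp]

/-- The cyclic predecessor of `r`. -/
def prd {n : ℕ} (r : Fin n) : Fin n :=
  ⟨((r : ℕ) + n - 1) % n, Nat.mod_lt _ (Nat.pos_of_ne_zero (by rintro rfl; exact r.elim0))⟩

lemma prd_val {n : ℕ} (r : Fin n) (hr : (r : ℕ) ≠ 0) : (prd r : ℕ) = r - 1 := by
  have := r.2
  simp only [prd]
  rw [show (r : ℕ) + n - 1 = (r - 1) + n by omega, Nat.add_mod_right, Nat.mod_eq_of_lt (by omega)]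

lemma av_prd {n : ℕ} (r : Fin n) (m : Fin n → ℕ) : av m (((r : ℕ) + n - 1) % n) = m (prd r) := by
  have h : ((r : ℕ) + n - 1) % n < n := (prd r).2
  simp [av, h, prd]

lemma av_fin {n : ℕ} (r : Fin n) (m : Fin n → ℕ) : av m (r : ℕ) = m r := by simp [av]

lemma dlt_prd {n : ℕ} (r u : Fin n) :
    dlt (((r : ℕ) + n - 1) % n) u = if u = prd r then 1 else 0 := by
  simp [dlt, prd, Fin.ext_iff]

lemma dlt_fin {n : ℕ} (r u : Fin n) : dlt (r : ℕ) u = if u = r then 1 else 0 := by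
  simp [dlt, Fin.ext_iff]

section Ops
variable {L : Type} [Field L]

lemma ket_eq {n : ℕ} (A : Fin n → ℤ) (M : Idx (allOne n)) (h : ∀ u, A u = M.1 u) :
    ket L (allOne n) A = Finsupp.single M 1 := by
  obtain rfl : A = fun u => (M.1 u : ℤ) := funext h
  have hM : (fun t => ((M.1 t : ℤ)).toNat) = M.1 := by ext; simp
  unfold ket
  rw [dif_pos]
  · congr 1
  · refine ⟨fun t => by positivity, ?_⟩
    rw [hM]; exact M.2

lemma ket_zero {n : ℕ} (A : Fin n → ℤ) (u : Fin n) (h : 1 < A u) :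
    ket L (allOne n) A = 0 := by
  unfold ket
  rw [dif_neg]
  rintro ⟨-, h2⟩
  have := h2 u rfl
  simp only at this
  omega

lemma kk_apply {n : ℕ} (A B : Fin n → ℤ) (a b : Idx (allOne n)) [Decidable ((∀ u, A u = a.1 u) ∧ ∀ u, B u = b.1 u)] :
    kk L (allOne n) A B (a, b) =
      if (∀ u, A u = a.1 u) ∧ ∀ u, B u = b.1 u then 1 else 0 := by
  classical
  split_ifs with h
  · obtain ⟨hA, hB⟩ := h
    obtain rfl : A = fun u => (a.1 u : ℤ) := funext hA
    obtain rfl : B = fun u => (b.1 u : ℤ) := funext hB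
    unfold kk
    have ha : (fun t => ((a.1 t : ℤ)).toNat) = a.1 := by ext; simp
    have hb : (fun t => ((b.1 t : ℤ)).toNat) = b.1 := by ext; simp
    rw [dif_pos]
    · rw [Finsupp.single_apply, if_pos]
      exact Prod.ext (Subtype.ext ha) (Subtype.ext hb)
    · refine ⟨⟨fun t => by positivity, ?_⟩, fun t => by positivity, ?_⟩
      · rw [ha]; exact a.2
      · rw [hb]; exact b.2
  · unfold kk
    split_ifs with h'
    · rw [Finsupp.single_apply, if_neg]
      rintro he
      apply h
      have h1 := congrArg (fun z => z.1.1) he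
      have h2 := congrArg (fun z => z.2.1) he
      simp only at h1 h2
      refine ⟨fun u => ?_, fun u => ?_⟩
      · rw [← h1]; exact (Int.toNat_of_nonneg (h'.1.1 u)).symm
      · rw [← h2]; exact (Int.toNat_of_nonneg (h'.2.1 u)).symm
    · rfl

lemma mkEnd_single {α : Type} (v : α → (α →₀ L)) (m : α) (c : L) :
    mkEnd L v (Finsupp.single m c) = c • v m := by
  simp [mkEnd]

lemma tens_single {n : ℕ} {ε : Fin n → Bool} (a b : Idx ε) (c d : L) :
    tens L (Finsupp.single a c) (Finsupp.single b d) = Finsupp.single (a, b) (c * d) := by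
  simp [tens]

lemma tens_zero_right {n : ℕ} {ε : Fin n → Bool} (u : W L ε) : tens L u 0 = 0 := by
  simp [tens]

lemma tens_zero_left {n : ℕ} {ε : Fin n → Bool} (u : W L ε) : tens L 0 u = 0 := by
  simp [tens]

variable (q : ℂ) (ι : ℂ →+* L)

/-- The eigenvalue `(-q⁻¹)^{-m_{r-1}+m_r}` of `k_r` on `|m⟩`. -/
def kval {n : ℕ} (r : Fin n) (m : Fin n → ℕ) : ℂ :=
  (-q⁻¹) ^ (-(m (prd r) : ℤ)) * (-q⁻¹) ^ (m r : ℤ)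

lemma kA_single {n : ℕ} (r : Fin n) (m : Idx (allOne n)) :
    kA q ι (allOne n) 1 r (Finsupp.single m 1) = Finsupp.single m (ι (kval q r m.1)) := by
  have h : ((r : ℕ) + n - 1) % n < n := (prd r).2
  rw [kA, mkEnd_single, av_prd, av_fin]
  simp [qc, kval, h]

lemma qnum_zero : qnum q 0 = 0 := by simp [qnum]

lemma qnum_one (hq0 : q ≠ 0) (hq : ∀ k : ℕ, k ≠ 0 → q ^ k ≠ 1) : qnum q 1 = 1 := by
  simp only [qnum, pow_one]
  apply div_self
  intro h
  apply hq 2 (by norm_num)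
  have : q = q⁻¹ := sub_eq_zero.mp h
  rw [pow_two]
  nth_rewrite 2 [this]
  exact mul_inv_cancel₀ hq0

lemma eA_single (hq0 : q ≠ 0) (hq : ∀ k : ℕ, k ≠ 0 → q ^ k ≠ 1) {n : ℕ} (x : L)
    (r : Fin n) (hr : (r : ℕ) ≠ 0) (m : Idx (allOne n)) :
    eA q ι (allOne n) x r (Finsupp.single m 1) =
      if m.1 (prd r) = 1 ∧ m.1 r = 0 then Finsupp.single (swp (prd r) r m) 1 else 0 := by
  have hne : prd r ≠ r := by
    intro h; have := prd_val r hr; rw [h] at this; omega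
  rw [eA, mkEnd_single, av_prd, if_neg hr, pow_zero, one_mul, one_smul]
  have h1 := idx_le m (prd r)
  have h2 := idx_le m r
  rcases Nat.le_one_iff_eq_zero_or_eq_one.mp h1 with h1 | h1
  · simp [h1, qnum_zero]
  rw [h1, qnum_one q hq0 hq, map_one, one_smul]
  rcases Nat.le_one_iff_eq_zero_or_eq_one.mp h2 with h2 | h2
  · rw [if_pos ⟨rfl, h2⟩]
    apply ket_eq
    intro u
    rw [dlt_prd, dlt_fin]
    by_cases hu : u = prd r
    · subst hu
      rw [swp_left]; simp [h1, h2, hne]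
    by_cases hu' : u = r
    · subst hu'
      rw [swp_right]; simp [h1, h2, hne.symm]
    · rw [swp_of_ne _ hu hu']; simp [hu, hu']
  · rw [if_neg (by omega)]
    apply ket_zero _ r
    rw [dlt_prd, dlt_fin]
    simp [h2, hne.symm]

/-- Matrix form of `Δ(k_r)`. -/
lemma dK_apply {n : ℕ} (r : Fin n) (v : WW L (allOne n)) (a b : Idx (allOne n)) :
    dK q ι (allOne n) 1 r v (a, b) = ι (kval q r a.1 * kval q r b.1) * v (a, b) := by
  classical
  induction v using Finsupp.induction_linear with
  | zero => simp
  | add f g hf hg => rw [map_add, Finsupp.add_apply, hf, hg, Finsupp.add_apply]; ring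
  | single ab c =>
    rw [dK, opT, mkEnd_single, kA_single, kA_single, tens_single, Finsupp.smul_apply,
      Finsupp.single_apply, Finsupp.single_apply]
    split_ifs with h
    · obtain rfl : ab = (a, b) := h
      simp [mul_comm]
    · simp

/-- Matrix form of `Δ(e_r)`, `r ≠ 0`. -/
lemma dE_apply (hq0 : q ≠ 0) (hq : ∀ k : ℕ, k ≠ 0 → q ^ k ≠ 1) {n : ℕ} (x y : L)
    (r : Fin n) (hr : (r : ℕ) ≠ 0) (v : WW L (allOne n)) (a b : Idx (allOne n)) :
    dE q ι (allOne n) x y r v (a, b) =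
      (if b.1 (prd r) = 0 ∧ b.1 r = 1 then v (a, swp (prd r) r b) else 0) +
      (if a.1 (prd r) = 0 ∧ a.1 r = 1 then ι (kval q r b.1) * v (swp (prd r) r a, b) else 0) := by
  classical
  induction v using Finsupp.induction_linear with
  | zero => simp
  | add f g hf hg =>
    rw [map_add, Finsupp.add_apply, hf, hg, Finsupp.add_apply, Finsupp.add_apply]
    split_ifs <;> ring
  | single ab c =>
    obtain ⟨a', b'⟩ := ab
    rw [dE, LinearMap.add_apply, Finsupp.add_apply]
    congr 1
    · rw [opT, mkEnd_single, LinearMap.id_apply, eA_single q ι hq0 hq y r hr]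
      have key : (b'.1 (prd r) = 1 ∧ b'.1 r = 0) → swp (prd r) r b' = b →
          (b.1 (prd r) = 0 ∧ b.1 r = 1) := by
        rintro h rfl; rw [swp_left, swp_right]; exact ⟨h.2, h.1⟩
      have key' : (b.1 (prd r) = 0 ∧ b.1 r = 1) → swp (prd r) r b' = b →
          (b'.1 (prd r) = 1 ∧ b'.1 r = 0) := by
        rintro h rfl; rw [swp_left, swp_right] at h; exact ⟨h.2, h.1⟩
      by_cases hb : b'.1 (prd r) = 1 ∧ b'.1 r = 0
      · rw [if_pos hb, tens_single, Finsupp.smul_apply, Finsupp.single_apply,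
          Finsupp.single_apply]
        simp only [Prod.mk.injEq, ← swp_eq_iff]
        by_cases h1 : a' = a ∧ swp (prd r) r b' = b
        · simp [h1, key hb h1.2]
        · simp [h1]
      · rw [if_neg hb, tens_zero_right]
        simp only [Finsupp.single_apply, Prod.mk.injEq, ← swp_eq_iff]
        by_cases h1 : a' = a ∧ swp (prd r) r b' = b
        · rw [if_neg fun h => hb (key' h h1.2)]; simp
        · simp [h1]
    · rw [opT, mkEnd_single, kA_single, eA_single q ι hq0 hq x r hr]
      have key : (a'.1 (prd r) = 1 ∧ a'.1 r = 0) → swp (prd r) r a' = a →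
          (a.1 (prd r) = 0 ∧ a.1 r = 1) := by
        rintro h rfl; rw [swp_left, swp_right]; exact ⟨h.2, h.1⟩
      have key' : (a.1 (prd r) = 0 ∧ a.1 r = 1) → swp (prd r) r a' = a →
          (a'.1 (prd r) = 1 ∧ a'.1 r = 0) := by
        rintro h rfl; rw [swp_left, swp_right] at h; exact ⟨h.2, h.1⟩
      by_cases hb : a'.1 (prd r) = 1 ∧ a'.1 r = 0
      · rw [if_pos hb, tens_single, Finsupp.smul_apply, Finsupp.single_apply,
          Finsupp.single_apply]
        simp only [Prod.mk.injEq, ← swp_eq_iff]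
        by_cases h1 : swp (prd r) r a' = a ∧ b' = b
        · simp [h1, key hb h1.1, mul_comm]
        · simp [h1]
      · rw [if_neg hb, tens_zero_left]
        simp only [Finsupp.single_apply, Prod.mk.injEq, ← swp_eq_iff]
        by_cases h1 : swp (prd r) r a' = a ∧ b' = b
        · rw [if_neg fun h => hb (key' h h1.1)]; simp
        · simp [h1]

lemma mem_WWlm {n l m : ℕ} (v : WW L (allOne n)) :
    v ∈ WWlm L (allOne n) l m ↔
      ∀ a b, v (a, b) ≠ 0 → (∑ u, a.1 u) = l ∧ (∑ u, b.1 u) = m := by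
  have : WWlm L (allOne n) l m = Finsupp.supported L L
      {p : Idx (allOne n) × Idx (allOne n) | (∑ t, p.1.1 t) = l ∧ (∑ t, p.2.1 t) = m} := by
    rw [Finsupp.supported_eq_span_single, WWlm]
    congr 1
    ext v
    simp only [Set.mem_ofPred_eq, Set.mem_image]
    constructor
    · rintro ⟨p, h1, h2, rfl⟩; exact ⟨p, ⟨h1, h2⟩, rfl⟩
    · rintro ⟨p, ⟨h1, h2⟩, rfl⟩; exact ⟨p, h1, h2, rfl⟩
  rw [this, Finsupp.mem_supported]
  constructor
  · intro h a b hv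
    exact h (Finset.mem_coe.2 (Finsupp.mem_support_iff.2 hv))
  · rintro h ⟨a, b⟩ hab
    exact h a b (Finsupp.mem_support_iff.1 (Finset.mem_coe.1 hab))

end Ops

/-! ### Inversions and sorted pairs -/

/-- `inv` of a pair of labels: the number of pairs of positions `u < v` carrying the local states
`(1,0)` at `u` and `(0,1)` at `v`. -/
def invP {n : ℕ} (a b : Fin n → ℕ) : ℕ :=
  ∑ u, ∑ v, if u < v then a u * (1 - b u) * (b v * (1 - a v)) else 0

lemma invP_swp {n : ℕ} {p r : Fin n} (hpr : (p : ℕ) + 1 = r) (a b : Idx (allOne n))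
    (hap : a.1 p = 1) (har : a.1 r = 0) (hbp : b.1 p = 0) (hbr : b.1 r = 1) :
    invP a.1 b.1 = invP (swp p r a).1 (swp p r b).1 + 1 := by
  have h1 : invP (swp p r a).1 (swp p r b).1 = ∑ u, ∑ v,
      if Equiv.swap p r u < Equiv.swap p r v then
        a.1 u * (1 - b.1 u) * (b.1 v * (1 - a.1 v)) else 0 := by
    unfold invP
    rw [← Equiv.sum_comp (Equiv.swap p r)]
    refine Finset.sum_congr rfl fun u _ => ?_
    rw [← Equiv.sum_comp (Equiv.swap p r)]
    refine Finset.sum_congr rfl fun v _ => ?_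
    simp [swp]
  have h2 : (∑ u : Fin n, ∑ v : Fin n, if u = p ∧ v = r then 1 else 0) = 1 := by
    simp [ite_and]
  refine Eq.trans ?_ (congrArg (invP (swp p r a).1 (swp p r b).1 + ·) h2)
  rw [h1, ← Finset.sum_add_distrib]
  unfold invP
  refine Finset.sum_congr rfl fun u _ => ?_
  rw [← Finset.sum_add_distrib]
  refine Finset.sum_congr rfl fun v _ => ?_
  by_cases hA : u = p ∧ v = r
  · obtain ⟨rfl, rfl⟩ := hA
    have h3 : u < v := by rw [Fin.lt_def]; omega
    simp [hap, har, hbp, hbr, h3, h3.le]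
  by_cases hB : u = r ∧ v = p
  · obtain ⟨rfl, rfl⟩ := hB
    simp [har, hA]
  have h4 : (u < v) ↔ Equiv.swap p r u < Equiv.swap p r v := by
    simp only [Equiv.swap_apply_def, Fin.lt_def, Fin.ext_iff] at *
    split_ifs <;> omega
  simp only [h4, if_neg hA, add_zero]

lemma sum_swp {n : ℕ} (p r : Fin n) (a : Idx (allOne n)) :
    ∑ u, (swp p r a).1 u = ∑ u, a.1 u :=
  Equiv.sum_comp (Equiv.swap p r) a.1

lemma monotone_of_prd {n : ℕ} (f : Fin n → ℕ) (h : ∀ r : Fin n, (r : ℕ) ≠ 0 → f (prd r) ≤ f r) :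
    ∀ u v : Fin n, u ≤ v → f u ≤ f v := by
  have key : ∀ k : ℕ, ∀ u v : Fin n, (v : ℕ) = u + k → f u ≤ f v := by
    intro k
    induction k with
    | zero => intro u v huv; rw [Fin.ext (by omega : (v : ℕ) = u)]
    | succ k ih =>
      intro u v huv
      have hv : (v : ℕ) ≠ 0 := by omega
      exact (ih u (prd v) (by rw [prd_val v hv]; omega)).trans (h v hv)
  intro u v huv
  exact key (v - u) u v (by rw [Fin.le_def] at huv; omega)

/-- Encoding the local states `(0,0), (0,1), (1,0), (1,1)` as `0, 1, 2, 3`, the pair `(a,b)` is a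
weakly increasing word. -/
def Srt {n : ℕ} (a b : Idx (allOne n)) : Prop :=
  ∀ u v, u ≤ v → 2 * a.1 u + b.1 u ≤ 2 * a.1 v + b.1 v

/-- A sorted pair is determined by its weight `a + b` and the size of `a`: only the local states
`(0,1)` and `(1,0)` are left open by the weight, and sorting puts the former before the latter. -/
lemma Srt.unique {n : ℕ} {a b a' b' : Idx (allOne n)} (h : Srt a b) (h' : Srt a' b')
    (hw : ∀ u, a.1 u + b.1 u = a'.1 u + b'.1 u) (hs : ∑ u, a.1 u = ∑ u, a'.1 u) :
    a = a' ∧ b = b' := by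
  have ha : ∀ u, a.1 u = a'.1 u := by
    by_contra hne
    push Not at hne
    obtain ⟨u₀, hu₀⟩ := hne
    have hex : ∃ u, a'.1 u < a.1 u := by
      by_contra hc
      push Not at hc
      exact absurd hs (Finset.sum_lt_sum (fun i _ => hc i)
        ⟨u₀, Finset.mem_univ _, lt_of_le_of_ne (hc _) hu₀⟩).ne
    have hex' : ∃ u, a.1 u < a'.1 u := by
      by_contra hc
      push Not at hc
      exact absurd hs.symm (Finset.sum_lt_sum (fun i _ => hc i)
        ⟨u₀, Finset.mem_univ _, lt_of_le_of_ne (hc _) (Ne.symm hu₀)⟩).ne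
    obtain ⟨u, hu⟩ := hex
    obtain ⟨v, hv⟩ := hex'
    have := idx_le a u; have := idx_le a' v; have := idx_le b u; have := idx_le b' u
    have := idx_le b v; have := idx_le b' v
    have := hw u; have := hw v
    rcases le_total u v with huv | huv
    · have := h u v huv; omega
    · have := h' v u huv; omega
  exact ⟨idx_ext ha, idx_ext fun u => by have := hw u; have := ha u; omega⟩

/-! ### Supports of singular vectors -/

section Singular
variable {L : Type} [Field L] (q : ℂ) (ι : ℂ →+* L)

lemma kval_ne_zero (hq0 : q ≠ 0) {n : ℕ} (r : Fin n) (m : Fin n → ℕ) : kval q r m ≠ 0 := by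
  have : -q⁻¹ ≠ 0 := neg_ne_zero.2 (inv_ne_zero hq0)
  exact mul_ne_zero (zpow_ne_zero _ this) (zpow_ne_zero _ this)

/-- The support of a nonzero vector killed by `Δ(e_1), …, Δ(e_{n-1})` contains a sorted pair:
an element with the fewest inversions. A descent at adjacent positions other than
`(1,0),(0,1)` forces the coefficient to vanish, and the descent `(1,0),(0,1)` can be
exchanged, giving an element of the support with one inversion less. -/
lemma exists_srt (hq0 : q ≠ 0) (hq : ∀ k : ℕ, k ≠ 0 → q ^ k ≠ 1) {n : ℕ} (x y : L)
    (v : WW L (allOne n)) (hv : v ≠ 0)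
    (he : ∀ i : Fin n, (i : ℕ) ≠ 0 → dE q ι (allOne n) x y i v = 0) :
    ∃ a b, v (a, b) ≠ 0 ∧ Srt a b := by
  obtain ⟨⟨a, b⟩, hab, hmin⟩ := Finset.exists_min_image v.support
    (fun p => invP p.1.1 p.2.1) (Finsupp.support_nonempty_iff.2 hv)
  rw [Finsupp.mem_support_iff] at hab
  refine ⟨a, b, hab, monotone_of_prd (fun u => 2 * a.1 u + b.1 u) ?_⟩
  intro r hr
  by_contra hlt
  replace hlt : ¬ 2 * a.1 (prd r) + b.1 (prd r) ≤ 2 * a.1 r + b.1 r := hlt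
  have ha1 := idx_le a (prd r)
  have ha2 := idx_le a r
  have hb1 := idx_le b (prd r)
  have hb2 := idx_le b r
  by_cases hb : b.1 (prd r) = 1 ∧ b.1 r = 0
  · have h := dE_apply q ι hq0 hq x y r hr v a (swp (prd r) r b)
    rw [he r hr, Finsupp.zero_apply, swp_left, swp_right, if_pos ⟨hb.2, hb.1⟩, if_neg (by omega),
      swp_swp, add_zero] at h
    exact hab h.symm
  · have ha : a.1 (prd r) = 1 ∧ a.1 r = 0 := by omega
    have h := dE_apply q ι hq0 hq x y r hr v (swp (prd r) r a) b
    have hk : ι (kval q r b.1) ≠ 0 := (map_ne_zero ι).2 (kval_ne_zero q hq0 r _)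
    rw [he r hr, Finsupp.zero_apply, swp_left, swp_right, if_pos (c := _ ∧ _) ⟨ha.2, ha.1⟩,
      swp_swp] at h
    by_cases hb' : b.1 (prd r) = 0 ∧ b.1 r = 1
    · have hne : v (swp (prd r) r a, swp (prd r) r b) ≠ 0 := by
        intro h0
        rw [if_pos hb', h0, zero_add] at h
        exact mul_ne_zero hk hab h.symm
      have h1 := hmin _ (Finsupp.mem_support_iff.2 hne)
      have h2 := invP_swp (p := prd r) (r := r) (by rw [prd_val r hr]; omega) a b
        ha.1 ha.2 hb'.1 hb'.2
      simp only at h1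
      omega
    · rw [if_neg hb', zero_add] at h
      exact mul_ne_zero hk hab h.symm

lemma zpow_inj_aux (hq0 : q ≠ 0) (hq : ∀ k : ℕ, k ≠ 0 → q ^ k ≠ 1) {i j : ℤ}
    (h : (-q⁻¹) ^ i = (-q⁻¹) ^ j) : i = j := by
  have hN : -q⁻¹ ≠ 0 := neg_ne_zero.2 (inv_ne_zero hq0)
  have h1 : (-q⁻¹) ^ (i - j) = 1 := by
    rw [zpow_sub₀ hN, h, div_self (zpow_ne_zero _ hN)]
  have h2 : q ^ (2 * (i - j)) = 1 := by
    have h3 : ((-q⁻¹) ^ (2 : ℤ)) ^ (i - j) = 1 := by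
      rw [← zpow_mul, mul_comm, zpow_mul, h1, one_zpow]
    have h4 : (-q⁻¹) ^ (2 : ℤ) = (q ^ (2 : ℤ))⁻¹ := by
      rw [← inv_zpow]; exact (even_two).neg_zpow _
    rw [h4, inv_zpow, inv_eq_one, ← zpow_mul] at h3
    exact h3
  by_contra hne
  rcases Int.natAbs_eq (2 * (i - j)) with h5 | h5
  · rw [h5, zpow_natCast] at h2
    exact hq _ (by omega) h2
  · rw [h5, zpow_neg, inv_eq_one, zpow_natCast] at h2
    exact hq _ (by omega) h2

lemma kval_mul (hq0 : q ≠ 0) {n : ℕ} (r : Fin n) (a b : Fin n → ℕ) :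
    kval q r a * kval q r b =
      (-q⁻¹) ^ (((a r + b r : ℕ) : ℤ) - ((a (prd r) + b (prd r) : ℕ) : ℤ)) := by
  have hN : -q⁻¹ ≠ 0 := neg_ne_zero.2 (inv_ne_zero hq0)
  simp only [kval]
  rw [← zpow_add₀ hN, ← zpow_add₀ hN, ← zpow_add₀ hN]
  congr 1
  push_cast
  ring

/-- Since `-q⁻¹` is not a root of unity, the `Δ(k_i)`-eigenvalues and the degree `l + m` determine
the weight `a + b`. -/
lemma weight_unique (hq0 : q ≠ 0) (hq : ∀ k : ℕ, k ≠ 0 → q ^ k ≠ 1) {n l m : ℕ}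
    (v : WW L (allOne n)) (hv : v ∈ WWlm L (allOne n) l m)
    (hk : ∀ i : Fin n, ∃ c : L, dK q ι (allOne n) 1 i v = c • v)
    {a b a' b' : Idx (allOne n)} (h : v (a, b) ≠ 0) (h' : v (a', b') ≠ 0) (u : Fin n) :
    a.1 u + b.1 u = a'.1 u + b'.1 u := by
  have hstep : ∀ r : Fin n,
      (((a.1 r + b.1 r : ℕ) : ℤ) - ((a.1 (prd r) + b.1 (prd r) : ℕ) : ℤ)) =
      (((a'.1 r + b'.1 r : ℕ) : ℤ) - ((a'.1 (prd r) + b'.1 (prd r) : ℕ) : ℤ)) := by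
    intro r
    obtain ⟨c, hc⟩ := hk r
    have h1 := congrArg (fun z => z (a, b)) hc
    have h2 := congrArg (fun z => z (a', b')) hc
    simp only [dK_apply, Finsupp.smul_apply, smul_eq_mul] at h1 h2
    have h3 := mul_right_cancel₀ h h1
    have h4 := mul_right_cancel₀ h' h2
    have h5 := ι.injective (h3.trans h4.symm)
    rw [kval_mul q hq0, kval_mul q hq0] at h5
    exact zpow_inj_aux q hq0 hq h5
  have hn : 0 < n := Nat.pos_of_ne_zero (by rintro rfl; exact u.elim0)
  -- the difference of the two weights is a constant with vanishing sum
  set d : Fin n → ℤ := fun r => ((a.1 r + b.1 r : ℕ) : ℤ) - ((a'.1 r + b'.1 r : ℕ) : ℤ) with hd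
  have hconst : ∀ k : ℕ, ∀ hk : k < n, d ⟨k, hk⟩ = d ⟨0, hn⟩ := by
    intro k
    induction k with
    | zero => intro _; rfl
    | succ k ih =>
      intro hk
      rw [← ih (by omega)]
      have h1 := hstep ⟨k + 1, hk⟩
      have h2 : prd (⟨k + 1, hk⟩ : Fin n) = ⟨k, by omega⟩ :=
        Fin.ext (by rw [prd_val _ (Nat.succ_ne_zero k)]; simp)
      rw [h2] at h1
      simp only [hd]
      linarith
  have hsum : ∑ r, d r = 0 := by
    have s1 := (mem_WWlm v).1 hv a b h
    have s2 := (mem_WWlm v).1 hv a' b' h'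
    simp only [hd]
    rw [Finset.sum_sub_distrib, ← Nat.cast_sum, ← Nat.cast_sum, Finset.sum_add_distrib,
      Finset.sum_add_distrib, s1.1, s1.2, s2.1, s2.2, sub_self]
  rw [Finset.sum_congr rfl (fun (r : Fin n) _ => hconst r r.2), Finset.sum_const, Finset.card_univ,
    Fintype.card_fin, nsmul_eq_mul] at hsum
  have h0 : d ⟨0, hn⟩ = 0 := by
    rcases mul_eq_zero.1 hsum with h | h
    · exact absurd h (by exact_mod_cast hn.ne')
    · exact h
  have h1 : ((a.1 u + b.1 u : ℕ) : ℤ) - ((a'.1 u + b'.1 u : ℕ) : ℤ) = 0 :=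
    (hconst u u.2).trans h0
  omega

end Singular

/-! ### Weights of sorted pairs -/

lemma upper_mem_iff {n : ℕ} (S : Finset (Fin n)) (hS : ∀ u v, u ≤ v → u ∈ S → v ∈ S) (u : Fin n) :
    u ∈ S ↔ n - S.card ≤ (u : ℕ) := by
  have hu := u.2
  constructor
  · intro h
    have : Finset.Ici u ⊆ S := fun v hv => hS u v (Finset.mem_Ici.1 hv) h
    have := Finset.card_le_card this
    rw [Fin.card_Ici] at this
    omega
  · intro h
    by_contra hne
    have : S ⊆ Finset.Ioi u := fun v hv => Finset.mem_Ioi.2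
      (lt_of_not_ge fun hvu => hne (hS v u hvu hv))
    have := Finset.card_le_card this
    rw [Fin.card_Ioi] at this
    omega

/-- The weight `(0^{n-s-t}, 1^s, 2^t)` with `s = l + m - 2t`. -/
def wt (n l m t : ℕ) (u : Fin n) : ℕ :=
  (if n - (l + m - t) ≤ (u : ℕ) then 1 else 0) + (if n - t ≤ (u : ℕ) then 1 else 0)

lemma wt_mono {n l m t : ℕ} {u v : Fin n} (h : (u : ℕ) ≤ v) : wt n l m t u ≤ wt n l m t v := by
  unfold wt; split_ifs <;> omega

/-- The weight of a sorted pair is `(0^{n-s-t}, 1^s, 2^t)` for some admissible `t`. -/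
lemma Srt.wt {n l m : ℕ} {a b : Idx (allOne n)} (h : Srt a b) (ha : ∑ u, a.1 u = l)
    (hb : ∑ u, b.1 u = m) :
    ∃ t, l + m - n ≤ t ∧ t ≤ min l m ∧ ∀ u, a.1 u + b.1 u = wt n l m t u := by
  classical
  set S : Finset (Fin n) := Finset.univ.filter fun u => 2 ≤ a.1 u + b.1 u with hS
  set T : Finset (Fin n) := Finset.univ.filter fun u => 1 ≤ a.1 u + b.1 u with hT
  have hw : ∀ u v, u ≤ v → a.1 u + b.1 u ≤ a.1 v + b.1 v := by
    intro u v huv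
    have := h u v huv
    have := idx_le a u; have := idx_le a v; have := idx_le b u; have := idx_le b v
    omega
  have hSu : ∀ u v, u ≤ v → u ∈ S → v ∈ S := by
    intro u v huv hu
    simp only [hS, Finset.mem_filter, Finset.mem_univ, true_and] at hu ⊢
    exact hu.trans (hw u v huv)
  have hTu : ∀ u v, u ≤ v → u ∈ T → v ∈ T := by
    intro u v huv hu
    simp only [hT, Finset.mem_filter, Finset.mem_univ, true_and] at hu ⊢
    exact hu.trans (hw u v huv)
  have hST : S.card + T.card = l + m := by
    rw [← ha, ← hb, ← Finset.sum_add_distrib, hS, hT, Finset.card_filter, Finset.card_filter,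
      ← Finset.sum_add_distrib]
    refine Finset.sum_congr rfl fun u _ => ?_
    have := idx_le a u; have := idx_le b u
    split_ifs <;> omega
  have hTn : T.card ≤ n := by simpa using Finset.card_le_univ T
  have hSl : S.card ≤ l := by
    rw [← ha, hS, Finset.card_filter]
    refine Finset.sum_le_sum fun u _ => ?_
    have := idx_le a u; have := idx_le b u
    split_ifs <;> omega
  have hSm : S.card ≤ m := by
    rw [← hb, hS, Finset.card_filter]
    refine Finset.sum_le_sum fun u _ => ?_
    have := idx_le a u; have := idx_le b u
    split_ifs <;> omega
  refine ⟨S.card, by omega, le_min hSl hSm, fun u => ?_⟩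
  have h1 := upper_mem_iff S hSu u
  have h2 := upper_mem_iff T hTu u
  rw [show T.card = l + m - S.card by omega] at h2
  unfold TetraGQ.wt
  simp only [← h1, ← h2]
  simp only [hS, hT, Finset.mem_filter, Finset.mem_univ, true_and]
  have := idx_le a u; have := idx_le b u
  split_ifs <;> omega

/-! ### Words supported on a window -/

section Xi

lemma window_sum {n s t : ℕ} (hst : s + t ≤ n) (f : Fin n → ℕ) (g : ℕ → ℕ)
    (h : ∀ u : Fin n, f u = if (u : ℕ) < n - s - t then 0
      else if (u : ℕ) < n - t then g ((u : ℕ) - (n - s - t)) else 0) :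
    ∑ u, f u = ∑ k ∈ Finset.range s, g k := by
  obtain ⟨o, rfl⟩ : ∃ o, n = o + s + t := ⟨n - s - t, by omega⟩
  have e1 : o + s + t - s - t = o := by omega
  have e2 : o + s + t - t = o + s := by omega
  rw [e1, e2] at h
  rw [Finset.sum_congr rfl fun u _ => h u,
    Fin.sum_univ_eq_sum_range (fun k => if k < o then 0 else if k < o + s then g (k - o) else 0),
    Finset.sum_range_add, Finset.sum_range_add]
  have h1 : ∑ k ∈ Finset.range o, (if k < o then 0 else if k < o + s then g (k - o) else 0) = 0 :=
    Finset.sum_eq_zero fun k hk => if_pos (Finset.mem_range.1 hk)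
  have h3 : ∑ k ∈ Finset.range t, (if o + s + k < o then 0
      else if o + s + k < o + s then g (o + s + k - o) else 0) = 0 :=
    Finset.sum_eq_zero fun k _ => by rw [if_neg (by omega), if_neg (by omega)]
  rw [h1, h3, zero_add, add_zero]
  refine Finset.sum_congr rfl fun k hk => ?_
  have := Finset.mem_range.1 hk
  rw [if_neg (by omega), if_pos (by omega), Nat.add_sub_cancel_left]

lemma sum_ivf {s : ℕ} (i : Fin s → ℕ) : ∑ k ∈ Finset.range s, ivf i k = ∑ u, i u := by
  rw [← Fin.sum_univ_eq_sum_range]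
  exact Finset.sum_congr rfl fun u _ => by simp [ivf]

lemma ivf_le {s : ℕ} {i : Fin s → ℕ} (hi : i ∈ Fintype.piFinset (fun _ => Finset.range 2))
    (k : ℕ) : ivf i k ≤ 1 := by
  unfold ivf
  split_ifs with h
  · have := Finset.mem_range.1 (Fintype.mem_piFinset.1 hi ⟨k, h⟩); omega
  · omega

/-- The label `a` is the window word `(0^{n-s-t}, iv, 1^t)`, in natural numbers. -/
def IsWin {n : ℕ} (s t : ℕ) (iv : ℕ → ℕ) (a : Fin n → ℕ) : Prop :=
  ∀ u, a u = if (u : ℕ) < n - s - t then 0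
    else if (u : ℕ) < n - t then iv ((u : ℕ) - (n - s - t)) else 1

lemma isWin_iff {n : ℕ} (s t : ℕ) (iv : ℕ → ℕ) (a : Fin n → ℕ) :
    (∀ u, winA n s t iv u = a u) ↔ IsWin s t iv a := by
  refine forall_congr' fun u => ?_
  unfold winA
  split_ifs <;> omega

lemma IsWin.sum {n s t : ℕ} (hst : s + t ≤ n) {iv : ℕ → ℕ} {a : Fin n → ℕ}
    (h : IsWin s t iv a) : ∑ u, a u = ∑ k ∈ Finset.range s, iv k + t := by
  have h1 : ∀ u : Fin n, a u = (if (u : ℕ) < n - s - t then 0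
      else if (u : ℕ) < n - t then iv ((u : ℕ) - (n - s - t)) else 0) +
      if n - t ≤ (u : ℕ) then 1 else 0 := by
    intro u
    rw [h u]
    split_ifs <;> omega
  rw [Finset.sum_congr rfl fun u _ => h1 u, Finset.sum_add_distrib,
    window_sum hst _ iv fun u => rfl,
    Fin.sum_univ_eq_sum_range (fun k => if n - t ≤ k then 1 else 0)]
  congr 1
  obtain ⟨o, rfl⟩ : ∃ o, n = o + t := ⟨n - t, by omega⟩
  rw [Finset.sum_range_add, Nat.add_sub_cancel]
  rw [Finset.sum_eq_zero fun k hk => if_neg (by have := Finset.mem_range.1 hk; omega)]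
  simp

lemma IsWin.invP {n s t : ℕ} (hst : s + t ≤ n) {iv : ℕ → ℕ} (hiv : ∀ k, iv k ≤ 1)
    {a b : Fin n → ℕ} (ha : IsWin s t iv a) (hb : IsWin s t (fun k => 1 - iv k) b) :
    invP a b = invv s iv := by
  have hG : ∀ u : Fin n, a u * (1 - b u) = if (u : ℕ) < n - s - t then 0
      else if (u : ℕ) < n - t then iv ((u : ℕ) - (n - s - t)) else 0 := by
    intro u
    rw [ha u, hb u]
    split_ifs
    · simp
    · simp only
      rcases Nat.le_one_iff_eq_zero_or_eq_one.mp (hiv ((u : ℕ) - (n - s - t))) with h | h <;>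
        simp [h]
    · simp
  have hH : ∀ u : Fin n, b u * (1 - a u) = if (u : ℕ) < n - s - t then 0
      else if (u : ℕ) < n - t then 1 - iv ((u : ℕ) - (n - s - t)) else 0 := by
    intro u
    rw [ha u, hb u]
    split_ifs
    · simp
    · simp only
      rcases Nat.le_one_iff_eq_zero_or_eq_one.mp (hiv ((u : ℕ) - (n - s - t))) with h | h <;>
        simp [h]
    · simp
  unfold TetraGQ.invP invv
  have hin : ∀ u : Fin n, (∑ v, if u < v then a u * (1 - b u) * (b v * (1 - a v)) else 0) =
      ∑ r ∈ Finset.range s,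
        if (u : ℕ) < n - s - t + r then a u * (1 - b u) * (1 - iv r) else 0 := by
    intro u
    apply window_sum hst
    intro v
    rw [hH v]
    simp only [Fin.lt_def]
    by_cases h1 : (v : ℕ) < n - s - t
    · simp [h1]
    · rw [if_neg h1, if_neg h1, Nat.add_sub_cancel' (not_lt.1 h1)]
      split_ifs <;> simp
  rw [Finset.sum_congr rfl fun u _ => hin u]
  apply window_sum hst
  intro u
  rw [hG u]
  by_cases h1 : (u : ℕ) < n - s - t
  · simp [h1]
  · rw [if_neg h1, if_neg h1]
    split_ifs with h2
    · refine Finset.sum_congr rfl fun r _ => ?_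
      have : (u : ℕ) < n - s - t + r ↔ (u : ℕ) - (n - s - t) < r := by omega
      simp only [this]
    · simp

/-! ### Coefficients of `ξ` and the classification -/

variable {L : Type} [Field L] (q : ℂ) (ι : ℂ →+* L)

/-- The coefficients of `ξ_t^{l,m}`: it is supported on the pairs of weight `(0^{n-s-t},1^s,2^t)`
and degree `l` in the first factor, with coefficient `q^inv`. -/
lemma xiA_apply {n l m t : ℕ} (h1 : l + m - n ≤ t) (h2 : t ≤ min l m) (a b : Idx (allOne n))
    [Decidable ((∀ u, a.1 u + b.1 u = wt n l m t u) ∧ ∑ u, a.1 u = l)] :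
    xiA q ι (allOne n) l m t (a, b) =
      if (∀ u, a.1 u + b.1 u = wt n l m t u) ∧ ∑ u, a.1 u = l then
        ι (q ^ invP a.1 b.1) else 0 := by
  classical
  have htl : t ≤ l := h2.trans (min_le_left _ _)
  have htm : t ≤ m := h2.trans (min_le_right _ _)
  unfold xiA
  set s := l + m - 2 * t with hs
  have hst : s + t ≤ n := by omega
  have ho : n - s - t = n - (l + m - t) := by omega
  rw [Finsupp.finsetSum_apply]
  simp only [Finsupp.smul_apply, kk_apply, isWin_iff, smul_eq_mul]
  by_cases hab : (∀ u, a.1 u + b.1 u = wt n l m t u) ∧ ∑ u, a.1 u = l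
  · rw [if_pos hab]
    obtain ⟨hw, hl⟩ := hab
    -- the only contributing word is the restriction of `a` to the window
    let i₀ : Fin s → ℕ := fun k => a.1 ⟨n - s - t + k, by have := k.2; omega⟩
    have hi₀ : i₀ ∈ Fintype.piFinset (fun _ => Finset.range 2) :=
      Fintype.mem_piFinset.2 fun k => Finset.mem_range.2 (Nat.lt_succ_of_le (idx_le a _))
    have hval : ∀ u : Fin n, ¬ (u : ℕ) < n - s - t → (u : ℕ) < n - t →
        ivf i₀ ((u : ℕ) - (n - s - t)) = a.1 u := by
      intro u hu hu'
      have h3 : (u : ℕ) - (n - s - t) < s := by omega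
      have h4 : (⟨n - s - t + ((u : ℕ) - (n - s - t)), by omega⟩ : Fin n) = u :=
        Fin.ext (by simp only; omega)
      rw [ivf, dif_pos h3]
      exact congrArg (fun v => a.1 v) h4
    have hA : IsWin s t (ivf i₀) a.1 := by
      intro u
      have h3 := hw u
      have h4 := idx_le a u
      have h5 := idx_le b u
      unfold wt at h3
      by_cases c1 : (u : ℕ) < n - s - t
      · rw [if_pos c1]
        rw [if_neg (by omega), if_neg (by omega)] at h3
        omega
      by_cases c2 : (u : ℕ) < n - t
      · rw [if_neg c1, if_pos c2, hval u c1 c2]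
      · rw [if_neg c1, if_neg c2]
        rw [if_pos (by omega), if_pos (by omega)] at h3
        omega
    have hB : IsWin s t (fun p => 1 - ivf i₀ p) b.1 := by
      intro u
      have h3 := hw u
      have h4 := idx_le a u
      have h5 := idx_le b u
      unfold wt at h3
      by_cases c1 : (u : ℕ) < n - s - t
      · rw [if_pos c1]
        rw [if_neg (by omega), if_neg (by omega)] at h3
        omega
      by_cases c2 : (u : ℕ) < n - t
      · simp only
        rw [if_neg c1, if_pos c2, hval u c1 c2]
        rw [if_pos (by omega), if_neg (by omega)] at h3
        omega
      · rw [if_neg c1, if_neg c2]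
        rw [if_pos (by omega), if_pos (by omega)] at h3
        omega
    have hsum := hA.sum hst
    rw [hl, sum_ivf] at hsum
    rw [Finset.sum_eq_single_of_mem i₀ hi₀]
    · rw [if_pos (show ∑ u, i₀ u = l - t by omega), if_pos (c := _ ∧ _) ⟨hA, hB⟩, mul_one,
        hA.invP hst (ivf_le hi₀) hB]
    · intro i hi hne
      rw [if_neg (c := _ ∧ _), mul_zero]
      rintro ⟨hA', -⟩
      apply hne
      funext k
      have hk := k.2
      have h3 := hA' ⟨n - s - t + k, by omega⟩
      simp only at h3
      rw [if_neg (by omega), if_pos (by omega), Nat.add_sub_cancel_left] at h3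
      simp only [i₀, h3]
      simp [ivf]
  · rw [if_neg hab]
    refine Finset.sum_eq_zero fun i hi => ?_
    by_cases hAB : IsWin s t (ivf i) a.1 ∧ IsWin s t (fun p => 1 - ivf i p) b.1
    · obtain ⟨hA, hB⟩ := hAB
      rw [if_neg, zero_mul]
      intro hil
      apply hab
      constructor
      · intro u
        have h3 := ivf_le hi ((u : ℕ) - (n - s - t))
        rw [hA u, hB u]
        unfold wt
        rw [ho] at h3 ⊢
        by_cases c1 : (u : ℕ) < n - (l + m - t)
        · rw [if_pos c1, if_pos c1, if_neg (by omega), if_neg (by omega)]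
        by_cases c2 : (u : ℕ) < n - t
        · rw [if_neg c1, if_neg c1, if_pos c2, if_pos c2, if_pos (by omega), if_neg (by omega)]
          simp only
          omega
        · rw [if_neg c1, if_neg c1, if_neg c2, if_neg c2, if_pos (by omega), if_pos (by omega)]
      · rw [hA.sum hst, sum_ivf, hil]; omega
    · rw [if_neg hAB, mul_zero]

lemma xiA_mem {n l m t : ℕ} (h1 : l + m - n ≤ t) (h2 : t ≤ min l m) :
    xiA q ι (allOne n) l m t ∈ WWlm L (allOne n) l m := by
  classical
  have htl : t ≤ l := h2.trans (min_le_left _ _)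
  have htm : t ≤ m := h2.trans (min_le_right _ _)
  rw [mem_WWlm]
  intro a b h
  rw [xiA_apply q ι h1 h2] at h
  have hab := (ite_ne_right_iff.1 h).1
  refine ⟨hab.2, ?_⟩
  have hsum : ∑ u, (a.1 u + b.1 u) = l + m := by
    have hc : ∀ k, k ≤ n → (∑ u : Fin n, if n - k ≤ (u : ℕ) then 1 else 0) = k := by
      intro k hk
      have := IsWin.sum (n := n) (s := 0) (t := k) (by omega) (iv := fun _ => 0)
        (a := fun u => if n - k ≤ (u : ℕ) then 1 else 0)
        (by intro u; simp only; split_ifs <;> omega)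
      simpa using this
    rw [Finset.sum_congr rfl fun u _ => hab.1 u]
    unfold wt
    rw [Finset.sum_add_distrib, hc _ (by omega), hc _ (by omega)]
    omega
  rw [Finset.sum_add_distrib, hab.2] at hsum
  omega

lemma xiA_ne_zero (hq0 : q ≠ 0) {n l m t : ℕ} (hl : l ≤ n) (h1 : l + m - n ≤ t)
    (h2 : t ≤ min l m) : xiA q ι (allOne n) l m t ≠ 0 := by
  classical
  have htl : t ≤ l := h2.trans (min_le_left _ _)
  have htm : t ≤ m := h2.trans (min_le_right _ _)
  let a : Idx (allOne n) := ⟨fun u => if n - l ≤ (u : ℕ) then 1 else 0, fun u _ => by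
    simp only; split_ifs <;> omega⟩
  let b : Idx (allOne n) := ⟨fun u => wt n l m t u - a.1 u, fun u _ => by
    simp only [wt, a]; split_ifs <;> omega⟩
  intro h0
  have h := xiA_apply q ι h1 h2 a b
  rw [h0, if_pos] at h
  · exact (map_ne_zero ι).2 (pow_ne_zero _ hq0) h.symm
  · constructor
    · intro u
      simp only [b, a, wt]
      split_ifs <;> omega
    · have := IsWin.sum (n := n) (s := 0) (t := l) (by omega) (iv := fun _ => 0)
        (a := a.1) (by intro u; simp only [a]; split_ifs <;> omega)
      simpa using this

lemma xiA_dK (hq0 : q ≠ 0) {n l m t : ℕ} (h1 : l + m - n ≤ t) (h2 : t ≤ min l m) (i : Fin n) :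
    ∃ c : L, dK q ι (allOne n) 1 i (xiA q ι (allOne n) l m t) = c • xiA q ι (allOne n) l m t := by
  classical
  refine ⟨ι ((-q⁻¹) ^ ((wt n l m t i : ℤ) - (wt n l m t (prd i) : ℤ))), ?_⟩
  ext ⟨a, b⟩
  rw [dK_apply, Finsupp.smul_apply, smul_eq_mul, xiA_apply q ι h1 h2]
  split_ifs with h
  · rw [kval_mul q hq0, h.1, h.1]
  · simp

/-- At a pair with local states `(0,0)`, `(1,1)` at the positions `r-1, r`, the two terms of
`Δ(e_r) ξ_t` come from pairs differing by one inversion, and cancel; elsewhere both terms vanish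
because the weight of `ξ_t` is increasing. -/
lemma xiA_dE (hq0 : q ≠ 0) (hq : ∀ k : ℕ, k ≠ 0 → q ^ k ≠ 1) {n l m t : ℕ} (x y : L)
    (h1 : l + m - n ≤ t) (h2 : t ≤ min l m) (r : Fin n) (hr : (r : ℕ) ≠ 0) :
    dE q ι (allOne n) x y r (xiA q ι (allOne n) l m t) = 0 := by
  classical
  have hp := prd_val r hr
  have hwt : wt n l m t (prd r) ≤ wt n l m t r := wt_mono (by omega)
  have hne : prd r ≠ r := by intro h; rw [h] at hp; omega
  ext ⟨a, b⟩
  rw [dE_apply q ι hq0 hq x y r hr, Finsupp.zero_apply]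
  have ha1 := idx_le a (prd r)
  have ha2 := idx_le a r
  have hb1 := idx_le b (prd r)
  have hb2 := idx_le b r
  by_cases hab : (a.1 (prd r) = 0 ∧ a.1 r = 1) ∧ b.1 (prd r) = 0 ∧ b.1 r = 1
  · rw [if_pos hab.1, if_pos hab.2, xiA_apply q ι h1 h2, xiA_apply q ι h1 h2, sum_swp]
    have hcond : (∀ u, (swp (prd r) r a).1 u + b.1 u = wt n l m t u) ↔
        ∀ u, a.1 u + (swp (prd r) r b).1 u = wt n l m t u := by
      refine forall_congr' fun u => ?_
      by_cases hu : u = prd r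
      · subst hu; rw [swp_left, swp_left]; omega
      by_cases hu' : u = r
      · subst hu'; rw [swp_right, swp_right]; omega
      · rw [swp_of_ne _ hu hu', swp_of_ne _ hu hu']
    have hinv := invP_swp (p := prd r) (r := r) (by omega) (swp (prd r) r a) b
      (by rw [swp_left]; exact hab.1.2) (by rw [swp_right]; exact hab.1.1) hab.2.1 hab.2.2
    rw [swp_swp] at hinv
    simp only [hcond]
    split_ifs with hc
    · rw [← map_mul, ← map_add, hinv, kval, hab.2.1, hab.2.2]
      convert map_zero ι using 2
      simp only [Nat.cast_zero, neg_zero, zpow_zero, one_mul, Nat.cast_one, zpow_one, pow_succ]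
      field_simp
      ring
    · simp
  · have t1 : (if b.1 (prd r) = 0 ∧ b.1 r = 1 then
        xiA q ι (allOne n) l m t (a, swp (prd r) r b) else 0) = 0 := by
      split_ifs with hb
      · rw [xiA_apply q ι h1 h2, if_neg]
        rintro ⟨hw, -⟩
        have e1 := hw (prd r)
        have e2 := hw r
        rw [swp_left] at e1
        rw [swp_right] at e2
        omega
      · rfl
    have t2 : (if a.1 (prd r) = 0 ∧ a.1 r = 1 then ι (kval q r b.1) *
        xiA q ι (allOne n) l m t (swp (prd r) r a, b) else 0) = 0 := by
      split_ifs with hb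
      · rw [xiA_apply q ι h1 h2, if_neg, mul_zero]
        rintro ⟨hw, -⟩
        have e1 := hw (prd r)
        have e2 := hw r
        rw [swp_left] at e1
        rw [swp_right] at e2
        omega
      · rfl
    rw [t1, t2, add_zero]

/-- Subtracting the multiple of `ξ_t` with the same coefficient at the sorted pair in the support
of `v` leaves a singular vector of the same weight which vanishes at the only sorted pair
available to it, hence is zero. -/
lemma singular_eq (hq0 : q ≠ 0) (hq : ∀ k : ℕ, k ≠ 0 → q ^ k ≠ 1) {n l m : ℕ} (x y : L)
    (v : WW L (allOne n)) (hvm : v ∈ WWlm L (allOne n) l m) (hv : v ≠ 0)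
    (hk : ∀ i : Fin n, ∃ c : L, dK q ι (allOne n) 1 i v = c • v)
    (he : ∀ i : Fin n, (i : ℕ) ≠ 0 → dE q ι (allOne n) x y i v = 0) :
    ∃ t : ℕ, l + m - n ≤ t ∧ t ≤ min l m ∧
      ∃ c : L, c ≠ 0 ∧ v = c • xiA q ι (allOne n) l m t := by
  classical
  obtain ⟨a, b, hab, hs⟩ := exists_srt q ι hq0 hq x y v hv he
  obtain ⟨hal, hbm⟩ := (mem_WWlm v).1 hvm a b hab
  obtain ⟨t, h1, h2, hw⟩ := hs.wt hal hbm
  have hxi : xiA q ι (allOne n) l m t (a, b) ≠ 0 := by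
    rw [xiA_apply q ι h1 h2, if_pos ⟨hw, hal⟩]
    exact (map_ne_zero ι).2 (pow_ne_zero _ hq0)
  set ξ := xiA q ι (allOne n) l m t with hξ
  set c := v (a, b) / ξ (a, b) with hc
  refine ⟨t, h1, h2, c, div_ne_zero hab hxi, ?_⟩
  by_contra hne
  obtain ⟨a', b', hab', hs'⟩ := exists_srt q ι hq0 hq x y (v - c • ξ) (sub_ne_zero.2 hne) (by
    intro i hi
    rw [map_sub, map_smul, he i hi, hξ, xiA_dE q ι hq0 hq x y h1 h2 i hi, smul_zero, sub_zero])
  have hdm : v - c • ξ ∈ WWlm L (allOne n) l m :=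
    Submodule.sub_mem _ hvm (Submodule.smul_mem _ _ (xiA_mem q ι h1 h2))
  have hal' := ((mem_WWlm _).1 hdm a' b' hab').1
  have hww : ∀ u, a.1 u + b.1 u = a'.1 u + b'.1 u := by
    by_cases hv' : v (a', b') = 0
    · have hx' : ξ (a', b') ≠ 0 := by
        intro h0
        apply hab'
        simp [hv', h0]
      rw [hξ, xiA_apply q ι h1 h2] at hx'
      intro u
      rw [hw u, (ite_ne_right_iff.1 hx').1.1 u]
    · exact fun u => weight_unique q ι hq0 hq v hvm hk hab hv' u
  obtain ⟨rfl, rfl⟩ := hs.unique hs' hww (hal.trans hal'.symm)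
  apply hab'
  rw [Finsupp.sub_apply, Finsupp.smul_apply, smul_eq_mul, hc, div_mul_cancel₀ _ hxi, sub_self]

end Xi

/-- classification of singular vectors in `𝒲_l⊗𝒲_m`, case `κ = n`. -/
theorem statement_8 (q : ℂ) (hq0 : q ≠ 0) (hq : ∀ k : ℕ, k ≠ 0 → q ^ k ≠ 1)
    {L : Type} [Field L] (ι : ℂ →+* L) (hι : Function.Injective ι)
    (x y : L) (hx : x ≠ 0) (hy : y ≠ 0)
    (n l m : ℕ) [NeZero n] (hn : 2 ≤ n) (hl : l ≤ n) (hm : m ≤ n)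
    (ε : Fin n → Bool) (hε : ε = fun _ => true) :
    (∀ v : WW L ε, v ∈ WWlm L ε l m → v ≠ 0 →
      (∀ i : Fin n, ∃ c : L, dK q ι ε 1 i v = c • v) →
      (∀ i : Fin n, (i : ℕ) ≠ 0 → dE q ι ε x y i v = 0) →
      ∃ t : ℕ, l + m - n ≤ t ∧ t ≤ min l m ∧
        ∃ c : L, c ≠ 0 ∧ v = c • xiA q ι ε l m t) ∧
    (∀ t : ℕ, l + m - n ≤ t → t ≤ min l m →
      xiA q ι ε l m t ≠ 0 ∧ xiA q ι ε l m t ∈ WWlm L ε l m ∧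
      (∀ i : Fin n, (i : ℕ) ≠ 0 → dE q ι ε x y i (xiA q ι ε l m t) = 0) ∧
      (∀ i : Fin n, ∃ c : L, dK q ι ε 1 i (xiA q ι ε l m t) = c • xiA q ι ε l m t)) := by
  obtain rfl : ε = allOne n := hε
  exact ⟨fun v hvm hv hk he => singular_eq q ι hq0 hq x y v hvm hv hk he,
    fun t h1 h2 => ⟨xiA_ne_zero q ι hq0 hl h1 h2, xiA_mem q ι h1 h2,
      fun i hi => xiA_dE q ι hq0 hq x y h1 h2 i hi, fun i => xiA_dK q ι hq0 h1 h2 i⟩⟩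

end TetraGQ
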